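/- Let φ : X → Y be a continuous, open and closed surjection of topological spaces with X Hausdorff, let m ≥ 1 be a natural number, and let X₁ ⊆ X be a closed subset such that φ⁻¹(φ(X₁)) = X₁ and such that for every x ∈ X ∖ X₁ the fiber φ⁻¹(φ(x)) has exactly m elements. Then the restriction of φ to X ∖ X₁, viewed as a map onto Y ∖ φ(X₁), is a covering map all of whose fibers have exactly m elements. -/

import Mathlib

/-!
Over a point `y` with `m` preimages, choose pairwise disjoint open neighborhoods of these preimages.
Since the map is open, the images of these neighborhoods intersect in an open neighborhood `V` of
`y`. A fiber over a point of `V` meets each of the `m` disjoint neighborhoods and has only `m`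
elements, so it meets each of them exactly once and has no further element. Hence `V` is evenly
covered.
-/

open Function Set Topology

section Transversal

variable {α ι : Type*} [Finite ι] {s : Set α} {t : ι → Set α}

theorem exists_transversal_of_encard_le (hdisj : Pairwise (Disjoint on t))
    (hmeet : ∀ i, (s ∩ t i).Nonempty) (hcard : s.encard ≤ ENat.card ι) :
    ∃ g : ι → α, (∀ i, g i ∈ t i) ∧ range g = s := by
  choose g hgs hgt using hmeet
  have hinj : Injective g := fun i j hij ↦
    hdisj.eq (not_disjoint_iff.2 ⟨g i, hgt i, hij ▸ hgt j⟩)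
  refine ⟨g, hgt, (finite_range g).eq_of_subset_of_encard_le (range_subset_iff.2 hgs) ?_⟩
  rwa [← image_univ, hinj.encard_image, encard_univ]

theorem subset_iUnion_of_encard_le (hdisj : Pairwise (Disjoint on t))
    (hmeet : ∀ i, (s ∩ t i).Nonempty) (hcard : s.encard ≤ ENat.card ι) : s ⊆ ⋃ i, t i := by
  obtain ⟨g, hgt, rfl⟩ := exists_transversal_of_encard_le hdisj hmeet hcard
  exact range_subset_iff.2 fun i ↦ mem_iUnion_of_mem i (hgt i)

theorem inter_subsingleton_of_encard_le (hdisj : Pairwise (Disjoint on t))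
    (hmeet : ∀ i, (s ∩ t i).Nonempty) (hcard : s.encard ≤ ENat.card ι) (i : ι) :
    (s ∩ t i).Subsingleton := by
  obtain ⟨g, hgt, rfl⟩ := exists_transversal_of_encard_le hdisj hmeet hcard
  suffices ∀ a ∈ range g ∩ t i, a = g i from fun a ha b hb ↦ (this a ha).trans (this b hb).symm
  rintro _ ⟨⟨j, rfl⟩, hji⟩
  rw [hdisj.eq (not_disjoint_iff.2 ⟨g j, hgt j, hji⟩)]

end Transversal

theorem encard_fiber_restrictPreimage {α β : Type*} (f : α → β) (s : Set β) (y : s) :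
    (s.restrictPreimage f ⁻¹' {y}).encard = (f ⁻¹' {(y : β)}).encard := by
  rw [← Subtype.val_injective.encard_image, image_val_preimage_restrictPreimage, image_singleton]

section Covering

variable {E B : Type*} [TopologicalSpace E] {f : E → B}

theorem isSeparatedMap_restrictPreimage (hf : IsSeparatedMap f) (s : Set B) :
    IsSeparatedMap (s.restrictPreimage f) := fun a b hab ↦
  hf.comp_right continuous_subtype_val Subtype.val_injective a b (congrArg Subtype.val hab)

theorem exists_isOpen_pairwise_disjoint_of_finite_fiber (hsep : IsSeparatedMap f) {y : B}
    (hfin : (f ⁻¹' {y}).Finite) :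
    ∃ U : f ⁻¹' {y} → Set E, (∀ e, ↑e ∈ U e ∧ IsOpen (U e)) ∧ Pairwise (Disjoint on U) := by
  have : Finite (f ⁻¹' {y}) := hfin
  have hnhds : Pairwise (Disjoint on fun e : f ⁻¹' {y} ↦ 𝓝 (e : E)) := fun a b hab ↦
    isSeparatedMap_iff_disjoint_nhds.1 hsep a b (a.2.trans b.2.symm) (Subtype.coe_ne_coe.2 hab)
  exact hnhds.exists_mem_filter_basis_of_disjoint fun e ↦ nhds_basis_opens (e : E)

variable [TopologicalSpace B]

theorem isEvenlyCovered_of_bijOn {ι : Type*} (hcont : Continuous f) (hopen : IsOpenMap f)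
    {U : ι → Set E} {V : Set B} (hU : ∀ i, IsOpen (U i)) (hV : IsOpen V)
    (hdisj : Pairwise (Disjoint on U)) (hbij : ∀ i, BijOn f (U i) V) (hcover : f ⁻¹' V ⊆ ⋃ i, U i)
    {y : B} (hy : y ∈ V) : IsEvenlyCovered f y (f ⁻¹' {y}) := by
  let : TopologicalSpace ι := ⊥
  have : DiscreteTopology ι := ⟨rfl⟩
  suffices IsEvenlyCovered f y ι from this.to_isEvenlyCovered_preimage
  cases isEmpty_or_nonempty ι with
  | inl _ => exact .of_preimage_eq_empty ι (hV.mem_nhds hy) (by simpa using hcover)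
  | inr hι =>
    have : Nonempty E := hι.elim fun i ↦ ((hbij i).surjOn hy).nonempty
    have isOpen_iff (i : ι) {W : Set B} (hW : W ⊆ V) : IsOpen W ↔ IsOpen (f ⁻¹' W ∩ U i) := by
      refine ⟨fun h ↦ (h.preimage hcont).inter (hU i), fun h ↦ ?_⟩
      rw [← inter_eq_left.2 (hW.trans (hbij i).surjOn), ← image_preimage_inter]
      exact hopen _ h
    exact .of_trivialization (t := hV.trivializationDiscrete U V isOpen_iff
      (fun i ↦ (hbij i).injOn) (fun i ↦ (hbij i).surjOn) hdisj hcover) hy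

theorem isEvenlyCovered_of_eventually_encard_fiber_le (hcont : Continuous f) (hopen : IsOpenMap f)
    (hsep : IsSeparatedMap f) {y : B} (hfin : (f ⁻¹' {y}).Finite)
    (hcard : ∀ᶠ z in 𝓝 y, (f ⁻¹' {z}).encard ≤ (f ⁻¹' {y}).encard) :
    IsEvenlyCovered f y (f ⁻¹' {y}) := by
  have : Finite (f ⁻¹' {y}) := hfin
  obtain ⟨U, hU, hdisj⟩ := exists_isOpen_pairwise_disjoint_of_finite_fiber hsep hfin
  obtain ⟨W, hWcard, hW, hyW⟩ := eventually_nhds_iff.1 hcard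
  let V := W ∩ ⋂ e, f '' U e
  have hV : IsOpen V := hW.inter (isOpen_iInter_of_finite fun e ↦ hopen _ (hU e).2)
  have hyV : y ∈ V := ⟨hyW, mem_iInter.2 fun e ↦ ⟨e, (hU e).1, e.2⟩⟩
  have hmeet {z : B} (hz : z ∈ V) (e : f ⁻¹' {y}) : (f ⁻¹' {z} ∩ U e).Nonempty := by
    obtain ⟨a, ha, haz⟩ := mem_iInter.1 hz.2 e
    exact ⟨a, haz, ha⟩
  have hbij (e : f ⁻¹' {y}) : BijOn f (U e ∩ f ⁻¹' V) V := by
    refine ⟨fun a ha ↦ ha.2, fun a ha b hb hab ↦ ?_, fun z hz ↦ ?_⟩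
    · exact inter_subsingleton_of_encard_le hdisj (hmeet hb.2) (hWcard _ hb.2.1) e
        ⟨hab, ha.1⟩ ⟨rfl, hb.1⟩
    · obtain ⟨a, rfl, ha⟩ := hmeet hz e
      exact ⟨a, ⟨ha, hz⟩, rfl⟩
  have hcover : f ⁻¹' V ⊆ ⋃ e, U e ∩ f ⁻¹' V := fun a ha ↦ by
    rw [← iUnion_inter]
    exact ⟨subset_iUnion_of_encard_le hdisj (hmeet ha) (hWcard _ ha.1) rfl, ha⟩
  exact isEvenlyCovered_of_bijOn hcont hopen (fun e ↦ (hU e).2.inter (hV.preimage hcont)) hV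
    (pairwise_disjoint_mono hdisj fun e ↦ inter_subset_left) hbij hcover hyV

theorem isCoveringMap_of_encard_fiber_eq (hcont : Continuous f) (hopen : IsOpenMap f)
    (hsep : IsSeparatedMap f) {m : ℕ} (hfib : ∀ y, (f ⁻¹' {y}).encard = m) : IsCoveringMap f :=
  fun y ↦ isEvenlyCovered_of_eventually_encard_fiber_le hcont hopen hsep
    (finite_of_encard_eq_coe (hfib y)) (.of_forall fun z ↦ ((hfib z).trans (hfib y).symm).le)

end Covering

theorem restriction_isCoveringMap_off_branch_locus_general
    {X Y : Type*} [TopologicalSpace X] [TopologicalSpace Y]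
    {φ : X → Y} (hcont : Continuous φ) (hopen : IsOpenMap φ) (hsep : IsSeparatedMap φ)
    (hsurj : Surjective φ) {m : ℕ} {X₁ : Set X} (hsat : φ ⁻¹' (φ '' X₁) = X₁)
    (hfib : ∀ x ∉ X₁, (φ ⁻¹' {φ x}).encard = m) :
    ∃ ψ : (X₁ᶜ : Set X) → ((φ '' X₁)ᶜ : Set Y),
      (∀ x : (X₁ᶜ : Set X), (ψ x : Y) = φ (x : X)) ∧
      IsCoveringMap ψ ∧
      ∀ y : ((φ '' X₁)ᶜ : Set Y), (ψ ⁻¹' {y}).encard = m := by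
  have hcompl : X₁ᶜ = φ ⁻¹' (φ '' X₁)ᶜ := by rw [preimage_compl, hsat]
  have hfib_restrict (y : ((φ '' X₁)ᶜ : Set Y)) :
      ((φ '' X₁)ᶜ.restrictPreimage φ ⁻¹' {y}).encard = m := by
    obtain ⟨x, hx⟩ := hsurj y
    rw [encard_fiber_restrictPreimage, ← hx]
    exact hfib x fun hxX₁ ↦ y.2 ⟨x, hxX₁, hx⟩
  rw [hcompl]
  exact ⟨(φ '' X₁)ᶜ.restrictPreimage φ, fun _ ↦ rfl,
    isCoveringMap_of_encard_fiber_eq hcont.restrictPreimage (hopen.restrictPreimage _)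
      (isSeparatedMap_restrictPreimage hsep _) hfib_restrict, hfib_restrict⟩

/-- Let `φ : X → Y` be a continuous, open and closed surjection with `X` Hausdorff, and let
`X₁ ⊆ X` be a closed subset saturated for `φ` (i.e. `φ⁻¹(φ(X₁)) = X₁`) such that every fiber
over the complement of `φ(X₁)` has exactly `m ≥ 1` elements.  Then the restriction of `φ`
to `X ∖ X₁`, viewed as a map onto `Y ∖ φ(X₁)`, is a covering map all of whose fibers have
exactly `m` elements. -/
theorem restriction_isCoveringMap_off_branch_locus
    {X Y : Type*} [TopologicalSpace X] [TopologicalSpace Y] [T2Space X]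
    (φ : X → Y) (hcont : Continuous φ) (hopen : IsOpenMap φ) (hclosed : IsClosedMap φ)
    (hsurj : Function.Surjective φ) (m : ℕ) (hm : 1 ≤ m)
    (X₁ : Set X) (hX₁ : IsClosed X₁) (hsat : φ ⁻¹' (φ '' X₁) = X₁)
    (hfib : ∀ x ∉ X₁, (φ ⁻¹' {φ x}).encard = m) :
    ∃ ψ : (X₁ᶜ : Set X) → ((φ '' X₁)ᶜ : Set Y),
      (∀ x : (X₁ᶜ : Set X), (ψ x : Y) = φ (x : X)) ∧
      IsCoveringMap ψ ∧
      ∀ y : ((φ '' X₁)ᶜ : Set Y), (ψ ⁻¹' {y}).encard = m :=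
  restriction_isCoveringMap_off_branch_locus_general hcont hopen (T2Space.isSeparatedMap φ)
    hsurj hsat hfib
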